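/- arXiv:2102.07714 — 4 statements merged into one kernel-verified Lean document; each statement's English description precedes it below -/
import Mathlib

section
/- Let J ⊆ ℝ be a compact interval and let f_1, …, f_n : ℝ → ℝ satisfy: f_j(J) ⊆ J; f_j is differentiable on J with 0 < f_j'(x) ≤ λ for all x ∈ J, where λ < 1; and there exist C > 0 and ε ∈ (0, 1] such that |log f_j'(x) − log f_j'(y)| ≤ C|x − y|^{ε} for all x, y ∈ J and all j. Then there exists a constant c > 0 (one may take c = C·|J|^{ε}/(1 − λ^{ε})) such that for every finite composition F = f_{j_1} ∘ f_{j_2} ∘ ⋯ ∘ f_{j_m} and all x, y ∈ J, e^{-c} ≤ F'(x)/F'(y) ≤ e^{c}. -/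
/-- Lemma (uniform bounded distortion): let `J = [a,b]` be a compact interval preserved by
maps `f_1, …, f_n` which are differentiable on `J` with `0 < f_j' ≤ λ < 1` and whose
logarithmic derivatives are `ε`-Hölder with constant `C` on `J`.  Then there is `c > 0`
(one may take `c = C·|J|^ε/(1 − λ^ε)`) such that for every finite composition
`F = f_{j₁} ∘ ⋯ ∘ f_{jₘ}` and all `x, y ∈ J`, `e^{-c} ≤ F'(x)/F'(y) ≤ e^{c}`. -/
theorem bounded_distortion (n : ℕ) (a b : ℝ) (hab : a ≤ b)
    (f : Fin n → ℝ → ℝ) (f' : Fin n → ℝ → ℝ)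
    (lam : ℝ) (hlam : lam < 1)
    (hmaps : ∀ j, ∀ x ∈ Set.Icc a b, f j x ∈ Set.Icc a b)
    (hderiv : ∀ j, ∀ x ∈ Set.Icc a b, HasDerivAt (f j) (f' j x) x)
    (hpos : ∀ j, ∀ x ∈ Set.Icc a b, 0 < f' j x)
    (hle : ∀ j, ∀ x ∈ Set.Icc a b, f' j x ≤ lam)
    (C ε : ℝ) (hC : 0 < C) (hε0 : 0 < ε) (hε1 : ε ≤ 1)
    (hHolder : ∀ j, ∀ x ∈ Set.Icc a b, ∀ y ∈ Set.Icc a b,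
      |Real.log (f' j x) - Real.log (f' j y)| ≤ C * |x - y| ^ ε) :
    ∃ c : ℝ, 0 < c ∧
      ∀ w : List (Fin n), ∀ x ∈ Set.Icc a b, ∀ y ∈ Set.Icc a b,
        Real.exp (-c) ≤
            deriv (w.foldr (fun j g => f j ∘ g) id) x /
              deriv (w.foldr (fun j g => f j ∘ g) id) y ∧
          deriv (w.foldr (fun j g => f j ∘ g) id) x /
              deriv (w.foldr (fun j g => f j ∘ g) id) y ≤ Real.exp c := by
  set l : ℝ := max lam 0 with hl
  have hl0 : 0 ≤ l := le_max_right _ _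
  have hl1 : l < 1 := max_lt hlam one_pos
  have hle1 : l ^ ε < 1 := Real.rpow_lt_one hl0 hl1 hε0
  have h1 : 0 < 1 - l ^ ε := by linarith
  obtain ⟨K, hK⟩ : ∃ K, K = C / (1 - l ^ ε) := ⟨_, rfl⟩
  have hK0 : 0 < K := hK ▸ div_pos hC h1
  have hKC : C + K * l ^ ε = K := by
    have : K * (1 - l ^ ε) = C := by rw [hK]; field_simp
    linarith
  have hlip : ∀ j, ∀ x ∈ Set.Icc a b, ∀ y ∈ Set.Icc a b,
      |f j x - f j y| ≤ l * |x - y| := by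
    intro j x hx y hy
    have := (convex_Icc a b).norm_image_sub_le_of_norm_hasDerivWithin_le (f := f j)
      (f' := f' j) (C := l) (fun z hz => (hderiv j z hz).hasDerivWithinAt)
      (fun z hz => by
        rw [Real.norm_eq_abs, abs_of_pos (hpos j z hz)]
        exact (hle j z hz).trans (le_max_left _ _)) hy hx
    simpa [Real.norm_eq_abs] using this
  have key : ∀ w : List (Fin n), ∃ D : ℝ → ℝ,
      (∀ x ∈ Set.Icc a b, w.foldr (fun j g => f j ∘ g) id x ∈ Set.Icc a b ∧
        HasDerivAt (w.foldr (fun j g => f j ∘ g) id) (D x) x ∧ 0 < D x) ∧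
      ∀ x ∈ Set.Icc a b, ∀ y ∈ Set.Icc a b,
        |Real.log (D x) - Real.log (D y)| +
          K * |w.foldr (fun j g => f j ∘ g) id x - w.foldr (fun j g => f j ∘ g) id y| ^ ε
          ≤ K * |x - y| ^ ε := by
    intro w
    induction w with
    | nil =>
      refine ⟨fun _ => 1, fun x hx => ⟨hx, hasDerivAt_id x, one_pos⟩, fun x _ y _ => ?_⟩
      simp
    | cons j w ih =>
      obtain ⟨D, hD, hb⟩ := ih
      simp only [List.foldr_cons]
      generalize w.foldr (fun j g => f j ∘ g) id = G at hD hb ⊢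
      refine ⟨fun x => f' j (G x) * D x, fun x hx => ?_, fun x hx y hy => ?_⟩
      · obtain ⟨p, q, r⟩ := hD x hx
        exact ⟨hmaps j _ p, (hderiv j _ p).comp x q, mul_pos (hpos j _ p) r⟩
      · obtain ⟨p, -, r⟩ := hD x hx
        obtain ⟨p', -, r'⟩ := hD y hy
        have e1 := hHolder j _ p _ p'
        have e2 := hb x hx y hy
        have e3 : |f j (G x) - f j (G y)| ^ ε ≤ l ^ ε * |G x - G y| ^ ε := by
          rw [← Real.mul_rpow hl0 (abs_nonneg _)]
          exact Real.rpow_le_rpow (abs_nonneg _) (hlip j _ p _ p') hε0.le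
        have e4 := mul_le_mul_of_nonneg_left e3 hK0.le
        have e5 : C * |G x - G y| ^ ε + K * (l ^ ε * |G x - G y| ^ ε)
            = K * |G x - G y| ^ ε := by
          rw [← mul_assoc, ← add_mul, hKC]
        have e6 := abs_add_le (Real.log (f' j (G x)) - Real.log (f' j (G y)))
          (Real.log (D x) - Real.log (D y))
        simp only [Function.comp_apply]
        rw [Real.log_mul (hpos j _ p).ne' r.ne', Real.log_mul (hpos j _ p').ne' r'.ne',
          add_sub_add_comm]
        linarith
  have hd : 0 ≤ (b - a) ^ ε := Real.rpow_nonneg (by linarith) _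
  refine ⟨K * (b - a) ^ ε + 1, by positivity, fun w x hx y hy => ?_⟩
  obtain ⟨D, hD, hb⟩ := key w
  obtain ⟨-, q, r⟩ := hD x hx
  obtain ⟨-, q', r'⟩ := hD y hy
  rw [q.deriv, q'.deriv]
  have e1 := hb x hx y hy
  have e2 : |x - y| ^ ε ≤ (b - a) ^ ε := by
    apply Real.rpow_le_rpow (abs_nonneg _) _ hε0.le
    rw [abs_le]
    constructor <;> linarith [hx.1, hx.2, hy.1, hy.2]
  have e3 := mul_le_mul_of_nonneg_left e2 hK0.le
  have e4 : 0 ≤ K * |w.foldr (fun j g => f j ∘ g) id x -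
      w.foldr (fun j g => f j ∘ g) id y| ^ ε := by positivity
  have e5 : |Real.log (D x) - Real.log (D y)| ≤ K * (b - a) ^ ε + 1 := by linarith
  rw [← Real.log_div r.ne' r'.ne', abs_le] at e5
  have hq : 0 < D x / D y := div_pos r r'
  exact ⟨(Real.le_log_iff_exp_le hq).1 e5.1, (Real.log_le_iff_le_exp hq).1 e5.2⟩
end

section
/- Let S(λ, c̄, p̄) be an iterated function scheme of similarities f_j(x) = λx + c_j (0 < λ < 1) with probability vector p̄ (p_j > 0), let μ be its stationary measure, and suppose 0 < α < 1 is such that I(μ, α) = ∬ |x − y|^{-α} dμ(x) dμ(y) is finite. Then there exist a compact interval K with f_j(K) ⊆ K for all j, a compact interval J whose interior contains {x − y : x, y ∈ K}, a constant θ > 0, a continuous function φ : ℝ → [0, ∞) with φ(x) > θ for all x ∈ J, a natural number n, and ε > 0, such that for every x ∈ J one has ((D^{(2)}_{α,S})^{n} φ)(x) ≤ (1 − ε) φ(x). -/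
open MeasureTheory
open scoped ENNReal

/-- The symmetric diffusion operator `D^{(2)}_{α,S}` of an iterated function scheme of
similarities `f_j(x) = λx + c_j` with probability vector `p̄`. -/
noncomputable def D2op (k : ℕ) (l α : ℝ) (c p : Fin k → ℝ) : (ℝ → ℝ) → ℝ → ℝ :=
  fun ψ x => l ^ (-α) * ∑ i, ∑ j, p i * p j * ψ ((x - c i + c j) / l)

/-- Strip around the line `s - t = x`. -/
def stripSet (x r : ℝ) : Set (ℝ × ℝ) := {q | |q.1 - q.2 - x| ≤ r}

lemma measurableSet_stripSet (x r : ℝ) : MeasurableSet (stripSet x r) := by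
  unfold stripSet
  exact measurableSet_le (by fun_prop) measurable_const

lemma D2op_mono (k : ℕ) (l α : ℝ) (hl0 : 0 < l) (c p : Fin k → ℝ) (hp : ∀ j, 0 < p j)
    (φ ψ : ℝ → ℝ) (h : ∀ x, φ x ≤ ψ x) (n : ℕ) :
    ∀ x, (D2op k l α c p)^[n] φ x ≤ (D2op k l α c p)^[n] ψ x := by
  induction n with
  | zero => simpa using h
  | succ n ih =>
    intro x
    rw [Function.iterate_succ_apply', Function.iterate_succ_apply']
    unfold D2op at *
    refine mul_le_mul_of_nonneg_left ?_ (Real.rpow_nonneg hl0.le _)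
    refine Finset.sum_le_sum fun i _ => Finset.sum_le_sum fun j _ => ?_
    exact mul_le_mul_of_nonneg_left (ih _) (mul_pos (hp i) (hp j)).le

lemma lint_self (k : ℕ) (l : ℝ) (c p : Fin k → ℝ) (μ : Measure ℝ)
    (hμ : μ = ∑ j, ENNReal.ofReal (p j) • Measure.map (fun x : ℝ => l * x + c j) μ)
    (f : ℝ → ℝ≥0∞) (hf : Measurable f) :
    ∫⁻ x, f x ∂μ = ∑ j, ENNReal.ofReal (p j) * ∫⁻ x, f (l * x + c j) ∂μ := by
  conv_lhs => rw [hμ]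
  rw [lintegral_finsetSum_measure]
  refine Finset.sum_congr rfl fun j _ => ?_
  rw [lintegral_smul_measure, lintegral_map hf (by fun_prop), smul_eq_mul]

lemma strip_self (k : ℕ) (l : ℝ) (hl0 : 0 < l) (c p : Fin k → ℝ) (μ : Measure ℝ)
    [IsProbabilityMeasure μ]
    (hμ : μ = ∑ j, ENNReal.ofReal (p j) • Measure.map (fun x : ℝ => l * x + c j) μ)
    (x r : ℝ) :
    (μ.prod μ) (stripSet x (l * r)) = ∑ i, ∑ j, ENNReal.ofReal (p i) * ENNReal.ofReal (p j) *
      (μ.prod μ) (stripSet ((x - c i + c j) / l) r) := by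
  have key : ∀ x r, (μ.prod μ) (stripSet x r) =
      ∫⁻ s, ∫⁻ t, (stripSet x r).indicator (fun _ => (1 : ℝ≥0∞)) (s, t) ∂μ ∂μ := by
    intro x r
    rw [← lintegral_prod _ ((measurable_const.indicator
      (measurableSet_stripSet x r)).aemeasurable)]
    exact (lintegral_indicator_one (measurableSet_stripSet x r)).symm
  have hm : ∀ x r, Measurable ((stripSet x r).indicator (fun _ => (1 : ℝ≥0∞))) := fun x r =>
    measurable_const.indicator (measurableSet_stripSet x r)
  rw [key, lint_self k l c p μ hμ _ (Measurable.lintegral_prod_right' (hm x (l * r)))]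
  refine Finset.sum_congr rfl fun i _ => ?_
  have h1 : ∀ s, ∫⁻ t, (stripSet x (l * r)).indicator (fun _ => (1 : ℝ≥0∞)) (l * s + c i, t) ∂μ
      = ∑ j, ENNReal.ofReal (p j) *
        ∫⁻ t, (stripSet ((x - c i + c j) / l) r).indicator (fun _ => (1 : ℝ≥0∞)) (s, t) ∂μ := by
    intro s
    rw [lint_self k l c p μ hμ
      (fun t => (stripSet x (l * r)).indicator (fun _ => (1 : ℝ≥0∞)) (l * s + c i, t))
      ((hm x (l * r)).comp measurable_prodMk_left)]
    refine Finset.sum_congr rfl fun j _ => ?_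
    congr 1
    refine lintegral_congr fun t => ?_
    have : (l * s + c i, l * t + c j) ∈ stripSet x (l * r) ↔
        (s, t) ∈ stripSet ((x - c i + c j) / l) r := by
      simp only [stripSet, Set.mem_ofPred_eq]
      have : l * s + c i - (l * t + c j) - x = l * (s - t - (x - c i + c j) / l) := by
        field_simp; ring
      rw [this, abs_mul, abs_of_pos hl0]
      exact mul_le_mul_iff_right₀ hl0
    by_cases h : (s, t) ∈ stripSet ((x - c i + c j) / l) r
    · rw [Set.indicator_of_mem h, Set.indicator_of_mem (this.2 h)]
    · rw [Set.indicator_of_notMem h, Set.indicator_of_notMem (fun h' => h (this.1 h'))]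
  simp_rw [h1]
  rw [lintegral_finsetSum]
  · rw [Finset.mul_sum]
    refine Finset.sum_congr rfl fun j _ => ?_
    rw [lintegral_const_mul _ (Measurable.lintegral_prod_right' (hm _ _)), key, mul_assoc]
  · intro j _
    exact (Measurable.lintegral_prod_right' (hm _ _)).const_mul _

lemma D2op_strip (k : ℕ) (l α : ℝ) (hl0 : 0 < l) (c p : Fin k → ℝ) (hp : ∀ j, 0 < p j)
    (μ : Measure ℝ) [IsProbabilityMeasure μ]
    (hμ : μ = ∑ j, ENNReal.ofReal (p j) • Measure.map (fun x : ℝ => l * x + c j) μ)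
    (A r : ℝ) (n : ℕ) :
    (D2op k l α c p)^[n] (fun x => A * (μ.prod μ).real (stripSet x r)) =
      fun x => A * (l ^ (-α)) ^ n * (μ.prod μ).real (stripSet x (l ^ n * r)) := by
  induction n with
  | zero => simp
  | succ n ih =>
    rw [Function.iterate_succ_apply', ih]
    funext x
    have h := congrArg ENNReal.toReal (strip_self k l hl0 c p μ hμ x (l ^ n * r))
    rw [ENNReal.toReal_sum (fun i _ => ENNReal.sum_ne_top.2 fun j _ => by finiteness)] at h
    have h2 : (μ.prod μ).real (stripSet x (l ^ (n + 1) * r)) = ∑ i, ∑ j, p i * p j *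
        (μ.prod μ).real (stripSet ((x - c i + c j) / l) (l ^ n * r)) := by
      rw [pow_succ', mul_assoc, Measure.real, h]
      refine Finset.sum_congr rfl fun i _ => ?_
      rw [ENNReal.toReal_sum (fun j _ => by finiteness)]
      refine Finset.sum_congr rfl fun j _ => ?_
      rw [ENNReal.toReal_mul, ENNReal.toReal_mul, ENNReal.toReal_ofReal (hp i).le,
        ENNReal.toReal_ofReal (hp j).le, Measure.real]
    rw [h2]
    simp only [D2op, Finset.mul_sum]
    refine Finset.sum_congr rfl fun i _ => Finset.sum_congr rfl fun j _ => ?_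
    ring

lemma ennreal_two_mul (a b : ℝ≥0∞) : 2 * (a * b) ≤ a * a + b * b := by
  rcases le_total a b with h | h
  · obtain ⟨d, rfl⟩ := exists_add_of_le h
    calc 2 * (a * (a + d)) = a * a + (a * a + 2 * (a * d)) := by ring
      _ ≤ a * a + (a * a + 2 * (a * d)) + d * d := le_self_add
      _ = _ := by ring
  · obtain ⟨d, rfl⟩ := exists_add_of_le h
    calc 2 * ((b + d) * b) = b * b + (b * b + 2 * (b * d)) := by ring
      _ ≤ b * b + (b * b + 2 * (b * d)) + d * d := le_self_add
      _ = _ := by ring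

lemma tsum_shift_le (a : ℤ → ℝ≥0∞) (i : ℤ) :
    ∑' k, a (k + i) * a k ≤ ∑' k, a k * a k := by
  have h : 2 * ∑' k, a (k + i) * a k ≤ 2 * ∑' k, a k * a k := by
    rw [← ENNReal.tsum_mul_left]
    calc ∑' k, 2 * (a (k + i) * a k)
        ≤ ∑' k, (a (k + i) * a (k + i) + a k * a k) :=
          ENNReal.tsum_le_tsum fun k => ennreal_two_mul _ _
      _ = ∑' k, a (k + i) * a (k + i) + ∑' k, a k * a k := ENNReal.tsum_add
      _ = _ := by
        rw [two_mul]
        congr 1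
        exact (Equiv.addRight i).tsum_eq (fun k => a k * a k)
  exact (ENNReal.mul_le_mul_iff_right (by norm_num) (by norm_num)).1 h

lemma strip_le (μ : Measure ℝ) [IsProbabilityMeasure μ] (x r : ℝ) (hr : 0 < r) :
    (μ.prod μ) (stripSet x r) ≤ 4 * (μ.prod μ) (stripSet 0 r) := by
  set I : ℤ → Set ℝ := fun k => {t | ⌊t / r⌋ = k} with hI
  have hIm : ∀ k, MeasurableSet (I k) := fun k =>
    (Int.measurable_floor.comp (measurable_id.div_const r)) (measurableSet_singleton k)
  set m : ℤ := ⌊x / r⌋ with hm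
  have hsub : stripSet x r ⊆ ⋃ i : Fin 4, ⋃ k : ℤ, I (k + (m - 1 + (i : ℕ))) ×ˢ I k := by
    rintro ⟨s, t⟩ h
    simp only [stripSet, Set.mem_ofPred_eq, abs_le] at h
    obtain ⟨ha, hb⟩ := h
    have ha' : t / r + x / r - 1 ≤ s / r := by
      have : s / r - (t / r + x / r - 1) = (s - t - x + r) / r := by field_simp; ring
      have h0 : 0 ≤ (s - t - x + r) / r := div_nonneg (by linarith) hr.le
      linarith
    have hb' : s / r ≤ t / r + x / r + 1 := by
      have : t / r + x / r + 1 - s / r = (r - (s - t - x)) / r := by field_simp; ring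
      have h0 : 0 ≤ (r - (s - t - x)) / r := div_nonneg (by linarith) hr.le
      linarith
    have h1 := Int.floor_le (t / r)
    have h2 := Int.lt_floor_add_one (t / r)
    have h3 := Int.floor_le (x / r)
    have h4 := Int.lt_floor_add_one (x / r)
    have h5 : ⌊t / r⌋ + m - 1 ≤ ⌊s / r⌋ := by
      rw [Int.le_floor]; push_cast; linarith
    have h6 : ⌊s / r⌋ < ⌊t / r⌋ + m + 3 := by
      rw [Int.floor_lt]; push_cast; linarith
    simp only [Set.mem_iUnion, Set.mem_prod, hI, Set.mem_ofPred_eq]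
    refine ⟨⟨(⌊s / r⌋ - (⌊t / r⌋ + m - 1)).toNat, by omega⟩, ⌊t / r⌋, ?_, rfl⟩
    simp only
    omega
  have hsq : ∑' k, μ (I k) * μ (I k) ≤ (μ.prod μ) (stripSet 0 r) := by
    have : (μ.prod μ) (⋃ k, I k ×ˢ I k) = ∑' k, μ (I k) * μ (I k) := by
      rw [measure_iUnion]
      · simp_rw [Measure.prod_prod]
      · intro a b hab
        rw [Function.onFun, Set.disjoint_left]
        rintro ⟨s, t⟩ h1 h2
        exact hab (h1.1.symm.trans h2.1)
      · exact fun k => (hIm k).prod (hIm k)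
    rw [← this]
    refine measure_mono ?_
    intro ⟨s, t⟩ h
    simp only [Set.mem_iUnion, Set.mem_prod, hI, Set.mem_ofPred_eq] at h
    obtain ⟨k, hs, ht⟩ := h
    have h1 := Int.floor_le (t / r)
    have h2 := Int.lt_floor_add_one (t / r)
    have h3 := Int.floor_le (s / r)
    have h4 := Int.lt_floor_add_one (s / r)
    rw [ht] at h1 h2
    rw [hs] at h3 h4
    have : |s / r - t / r| ≤ 1 := abs_le.2 ⟨by linarith, by linarith⟩
    rw [← sub_div, abs_div, abs_of_pos hr, div_le_one hr] at this
    simpa [stripSet] using this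
  calc (μ.prod μ) (stripSet x r)
      ≤ (μ.prod μ) (⋃ i : Fin 4, ⋃ k : ℤ, I (k + (m - 1 + (i : ℕ))) ×ˢ I k) := measure_mono hsub
    _ ≤ ∑' i : Fin 4, (μ.prod μ) (⋃ k : ℤ, I (k + (m - 1 + (i : ℕ))) ×ˢ I k) :=
        measure_iUnion_le _
    _ ≤ ∑' i : Fin 4, ∑' k : ℤ, μ (I (k + (m - 1 + (i : ℕ)))) * μ (I k) := by
        refine ENNReal.tsum_le_tsum fun i => (measure_iUnion_le _).trans ?_
        simp_rw [Measure.prod_prod]; exact le_rfl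
    _ ≤ ∑' i : Fin 4, (μ.prod μ) (stripSet 0 r) :=
        ENNReal.tsum_le_tsum fun i => (tsum_shift_le (fun k => μ (I k)) _).trans hsq
    _ = _ := by simp [tsum_fintype]

lemma strip_tendsto (μ : Measure ℝ) [IsProbabilityMeasure μ] (α : ℝ) (hα0 : 0 < α)
    (hfin : (∫⁻ x, ∫⁻ y, (ENNReal.ofReal |x - y|) ^ (-α) ∂μ ∂μ) ≠ ⊤)
    (r : ℕ → ℝ) (hr : ∀ n, 0 < r n) (hr0 : Filter.Tendsto r Filter.atTop (nhds 0)) :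
    Filter.Tendsto (fun n => r n ^ (-α) * (μ.prod μ).real (stripSet 0 (r n)))
      Filter.atTop (nhds 0) := by
  set f : ℝ × ℝ → ℝ≥0∞ := fun q => (ENNReal.ofReal |q.1 - q.2|) ^ (-α) with hf
  have hfm : Measurable f := by
    apply Measurable.pow_const
    fun_prop
  have hE : ∫⁻ q, f q ∂(μ.prod μ) ≠ ⊤ := by
    rw [lintegral_prod _ hfm.aemeasurable]; exact hfin
  have hle : ∀ n, ENNReal.ofReal (r n ^ (-α)) * (μ.prod μ) (stripSet 0 (r n)) ≤
      ∫⁻ q in stripSet 0 (r n), f q ∂(μ.prod μ) := by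
    intro n
    rw [← setLIntegral_const]
    refine setLIntegral_mono' (measurableSet_stripSet _ _) fun q hq => ?_
    rw [← ENNReal.ofReal_rpow_of_pos (hr n)]
    have : |q.1 - q.2| ≤ r n := by simpa [stripSet] using hq
    simp only [hf, ENNReal.rpow_neg]
    gcongr
  have hmeas : Filter.Tendsto (fun n => (μ.prod μ) (stripSet 0 (r n)))
      Filter.atTop (nhds 0) := by
    have h1 : Filter.Tendsto (fun n => ENNReal.ofReal (r n ^ α) * ∫⁻ q, f q ∂(μ.prod μ))
        Filter.atTop (nhds 0) := by
      have h2 : Filter.Tendsto (fun n => ENNReal.ofReal (r n ^ α)) Filter.atTop (nhds 0) := by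
        have := (hr0.rpow_const (p := α) (Or.inr hα0.le))
        rw [Real.zero_rpow hα0.ne'] at this
        simpa using ENNReal.tendsto_ofReal this
      simpa using ENNReal.Tendsto.mul_const h2 (Or.inr hE)
    refine tendsto_of_tendsto_of_tendsto_of_le_of_le tendsto_const_nhds h1
      (fun _ => zero_le) fun n => ?_
    calc (μ.prod μ) (stripSet 0 (r n))
        = ENNReal.ofReal (r n ^ α) *
          (ENNReal.ofReal (r n ^ (-α)) * (μ.prod μ) (stripSet 0 (r n))) := by
          rw [← mul_assoc, ← ENNReal.ofReal_mul (Real.rpow_nonneg (hr n).le _),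
            ← Real.rpow_add (hr n)]
          simp
      _ ≤ _ := by
          gcongr
          exact (hle n).trans (setLIntegral_le_lintegral _ _)
  have h3 := tendsto_setLIntegral_zero hE hmeas
  have h4 := tendsto_of_tendsto_of_tendsto_of_le_of_le tendsto_const_nhds h3
      (fun _ => zero_le) hle
  have h5 := (ENNReal.tendsto_toReal ENNReal.zero_ne_top).comp h4
  refine h5.congr fun n => ?_
  simp [Measure.real, ENNReal.toReal_ofReal (Real.rpow_nonneg (hr n).le _)]

lemma exists_strip_pos (μ : Measure ℝ) [IsProbabilityMeasure μ] :
    ∃ T : ℝ, 0 < T ∧ 0 < (μ.prod μ).real (stripSet 0 T) := by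
  by_contra! h
  have h0 : ∀ n : ℕ, (μ.prod μ) (stripSet 0 ((n : ℝ) + 1)) = 0 := by
    intro n
    have := le_antisymm (h ((n : ℝ) + 1) (by positivity)) measureReal_nonneg
    exact (measureReal_eq_zero_iff).1 this
  have h1 := measure_iUnion_null h0
  have h2 : (⋃ n : ℕ, stripSet 0 ((n : ℝ) + 1)) = Set.univ := by
    rw [Set.eq_univ_iff_forall]
    intro q
    obtain ⟨n, hn⟩ := exists_nat_ge (|q.1 - q.2 - 0|)
    exact Set.mem_iUnion.2 ⟨n, by simp only [stripSet, Set.mem_ofPred_eq]; linarith⟩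
  rw [h2, measure_univ] at h1
  exact one_ne_zero h1

/-- Lemma: if the stationary measure `μ` of an iterated function scheme of similarities
has finite energy `I(μ, α)` for some `0 < α < 1`, then there are an invariant compact
interval `K`, an admissible compact interval `J`, `θ > 0`, a continuous nonnegative
function `φ` with `φ > θ` on `J`, a natural number `n` and `ε > 0` such that
`(D^{(2)}_{α,S})^n φ ≤ (1 − ε) φ` on `J`. -/
theorem finding_contracted_test_function (k : ℕ) (l : ℝ) (hl0 : 0 < l) (hl1 : l < 1)
    (c : Fin k → ℝ) (p : Fin k → ℝ) (hp : ∀ j, 0 < p j) (hpsum : ∑ j, p j = 1)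
    (μ : Measure ℝ) [IsProbabilityMeasure μ]
    (hμ : μ = ∑ j, ENNReal.ofReal (p j) • Measure.map (fun x : ℝ => l * x + c j) μ)
    (α : ℝ) (hα0 : 0 < α) (hα1 : α < 1)
    (hfin : (∫⁻ x, ∫⁻ y, (ENNReal.ofReal |x - y|) ^ (-α) ∂μ ∂μ) ≠ ⊤) :
    ∃ (a b : ℝ), a ≤ b ∧ (∀ j, ∀ x ∈ Set.Icc a b, l * x + c j ∈ Set.Icc a b) ∧
    ∃ (u v : ℝ), u ≤ v ∧
      {z : ℝ | ∃ x ∈ Set.Icc a b, ∃ y ∈ Set.Icc a b, z = x - y}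
        ⊆ interior (Set.Icc u v) ∧
    ∃ θ : ℝ, 0 < θ ∧
    ∃ φ : ℝ → ℝ, Continuous φ ∧ (∀ x, 0 ≤ φ x) ∧ (∀ x ∈ Set.Icc u v, θ < φ x) ∧
    ∃ (m : ℕ) (ε : ℝ), 0 < ε ∧
      ∀ x ∈ Set.Icc u v, (D2op k l α c p)^[m] φ x ≤ (1 - ε) * φ x := by
  set R : ℝ := (∑ j, |c j|) / (1 - l) with hR
  have h1l : 0 < 1 - l := by linarith
  have hR0 : 0 ≤ R := div_nonneg (Finset.sum_nonneg fun _ _ => abs_nonneg _) h1l.le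
  have hcR : ∀ j, |c j| ≤ (1 - l) * R := by
    intro j
    rw [hR, mul_div_cancel₀ _ h1l.ne']
    exact Finset.single_le_sum (f := fun j => |c j|) (fun _ _ => abs_nonneg _) (Finset.mem_univ j)
  refine ⟨-R, R, by linarith, ?_, -(2 * R + 1), 2 * R + 1, by linarith, ?_, 1 / 2, by norm_num,
    fun x => max 0 (min 1 (2 * R + 2 - |x|)), by fun_prop, fun x => le_max_left _ _, ?_, ?_⟩
  · intro j x hx
    have h1 := abs_le.1 (hcR j)
    have h2 := mul_le_mul_of_nonneg_left hx.1 hl0.le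
    have h3 := mul_le_mul_of_nonneg_left hx.2 hl0.le
    constructor <;> nlinarith
  · rw [interior_Icc]
    rintro z ⟨x, hx, y, hy, rfl⟩
    constructor <;> linarith [hx.1, hx.2, hy.1, hy.2]
  · intro x hx
    have : |x| ≤ 2 * R + 1 := abs_le.2 ⟨hx.1, hx.2⟩
    refine lt_max_of_lt_right (lt_min (by norm_num) (by linarith))
  obtain ⟨T, hT, hδ⟩ := exists_strip_pos μ
  set δ := (μ.prod μ).real (stripSet 0 T) with hδdef
  set ρ := 2 * R + 2 + T with hρ
  have hρ0 : 0 < ρ := by linarith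
  have hdom : ∀ x, max 0 (min 1 (2 * R + 2 - |x|)) ≤
      δ⁻¹ * (μ.prod μ).real (stripSet x ρ) := by
    intro x
    rcases le_or_gt |x| (2 * R + 2) with hx | hx
    · have h1 : δ ≤ (μ.prod μ).real (stripSet x ρ) := by
        refine measureReal_mono ?_
        intro q hq
        simp only [stripSet, Set.mem_ofPred_eq, sub_zero] at hq ⊢
        calc |q.1 - q.2 - x| ≤ |q.1 - q.2| + |x| := abs_sub _ _
          _ ≤ ρ := by linarith
      calc max 0 (min 1 (2 * R + 2 - |x|)) ≤ 1 := max_le (by norm_num) (min_le_left _ _)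
        _ = δ⁻¹ * δ := (inv_mul_cancel₀ hδ.ne').symm
        _ ≤ _ := by gcongr
    · rw [max_eq_left ((min_le_right _ _).trans (by linarith))]
      positivity
  have hlim := strip_tendsto μ α hα0 hfin (fun n => l ^ n * ρ) (fun n => by positivity)
    (by simpa using (tendsto_pow_atTop_nhds_zero_of_lt_one hl0.le hl1).mul_const ρ)
  have hC : 0 < 1 / (8 * δ⁻¹ * ρ ^ α) := by positivity
  obtain ⟨n, hn⟩ := (hlim.eventually (gt_mem_nhds hC)).exists
  refine ⟨n, 1 / 2, by norm_num, fun x hx => ?_⟩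
  have hx' : |x| ≤ 2 * R + 1 := abs_le.2 ⟨hx.1, hx.2⟩
  have hφ : max 0 (min 1 (2 * R + 2 - |x|)) = 1 := by
    rw [min_eq_left (by linarith), max_eq_right (by norm_num)]
  have h1 := D2op_mono k l α hl0 c p hp _ _ hdom n x
  rw [D2op_strip k l α hl0 c p hp μ hμ] at h1
  have h2 : (μ.prod μ).real (stripSet x (l ^ n * ρ)) ≤
      4 * (μ.prod μ).real (stripSet 0 (l ^ n * ρ)) := by
    have := ENNReal.toReal_mono (by finiteness) (strip_le μ x (l ^ n * ρ) (by positivity))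
    simpa [Measure.real] using this
  have h3 : (l ^ (-α)) ^ n = ρ ^ α * (l ^ n * ρ) ^ (-α) := by
    rw [Real.mul_rpow (by positivity) hρ0.le, ← Real.rpow_natCast, ← Real.rpow_natCast,
      ← Real.rpow_mul hl0.le, ← Real.rpow_mul hl0.le, mul_left_comm, ← Real.rpow_add hρ0]
    simp [mul_comm]
  beta_reduce at h1 hn ⊢
  rw [hφ]
  refine h1.trans ?_
  calc δ⁻¹ * (l ^ (-α)) ^ n * (μ.prod μ).real (stripSet x (l ^ n * ρ))
      ≤ δ⁻¹ * (l ^ (-α)) ^ n * (4 * (μ.prod μ).real (stripSet 0 (l ^ n * ρ))) := by gcongr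
    _ = 4 * δ⁻¹ * ρ ^ α * ((l ^ n * ρ) ^ (-α) * (μ.prod μ).real (stripSet 0 (l ^ n * ρ))) := by
        rw [h3]; ring
    _ ≤ 4 * δ⁻¹ * ρ ^ α * (1 / (8 * δ⁻¹ * ρ ^ α)) := by gcongr
    _ = (1 - 1 / 2) * 1 := by
        have : ρ ^ α ≠ 0 := by positivity
        field_simp
        norm_num
end

section
/- Let J ⊆ ℝ be a compact interval and let f_1, …, f_n : ℝ → ℝ be C^{1+ε} orientation-preserving bijections (each f_j' is positive, Hölder continuous with some exponent ε > 0, and satisfies f_j'(x) ≤ λ_max for some constant λ_max < 1) with f_j(J) ⊆ J for all j, let p̄ be a probability vector with p_j > 0, and let μ be a Borel probability measure with μ = ∑_j p_j (f_j)_*μ. Suppose α > 0 is such that there exist ᾱ > α and C > 0 with μ(B_ρ(x)) ≤ C ρ^{ᾱ} for all x ∈ ℝ and ρ > 0. Then there exists r > 0 such that the sup-norms of the iterates of the indicator of B_r(J) under the asymmetric diffusion operator tend to zero: lim_{n→∞} sup_{x∈ℝ} |((D^{(1)}_{α,T})^{n} 𝟙_{B_r(J)})(x)| = 0. -/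
open MeasureTheory
open scoped ENNReal

/-- The asymmetric diffusion operator `D^{(1)}_{α,T}` of an iterated function scheme of
contracting diffeomorphisms `f_j` with probability vector `p̄`:
`ψ ↦ ∑_j p_j |(f_j^{-1})'(x)|^α ψ(f_j^{-1}(x))`. -/
noncomputable def D1op (n : ℕ) (α : ℝ) (f : Fin n → ℝ → ℝ) (p : Fin n → ℝ) :
    (ℝ → ℝ) → ℝ → ℝ :=
  fun ψ x => ∑ j, p j * |deriv (Function.invFun (f j)) x| ^ α *
    ψ (Function.invFun (f j) x)


namespace IterAux

/-- The truncated Riesz kernel. -/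
noncomputable def ker (α ρ x y : ℝ) : ℝ≥0∞ :=
  (Metric.closedBall x ρ).indicator (fun y => ENNReal.ofReal |y - x| ^ (-α)) y

lemma measurable_ker (α ρ x : ℝ) : Measurable (ker α ρ x) := by
  unfold ker
  apply Measurable.indicator _ measurableSet_closedBall
  fun_prop

lemma lip {f f' : ℝ → ℝ} {lam : ℝ} (hd : ∀ x, HasDerivAt f (f' x) x)
    (hpos : ∀ x, 0 < f' x) (hle : ∀ x, f' x ≤ lam) (u z : ℝ) :
    |f z - f u| ≤ lam * |z - u| := by
  have := Convex.norm_image_sub_le_of_norm_hasDerivWithin_le (f := f) (f' := f')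
    (s := Set.univ) (C := lam) (x := u) (y := z) (fun x _ => (hd x).hasDerivWithinAt)
    (fun x _ => by rw [Real.norm_eq_abs, abs_of_pos (hpos x)]; exact hle x)
    convex_univ trivial trivial
  simpa using this

lemma distort {f f' : ℝ → ℝ} {Ch ε c ρ : ℝ} (hd : ∀ x, HasDerivAt f (f' x) x)
    (hpos : ∀ x, 0 < f' x) (hε : 0 < ε) (hCh : 0 ≤ Ch)
    (hh : ∀ x y, |f' x - f' y| ≤ Ch * |x - y| ^ ε) (hc : 0 < c) (u z : ℝ) (hu : c ≤ f' u)
    (hz : |z - u| ≤ ρ) :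
    |f z - f u| ≤ f' u * Real.exp (Ch / c * ρ ^ ε) * |z - u| := by
  have hρ : 0 ≤ ρ := (abs_nonneg _).trans hz
  have := Convex.norm_image_sub_le_of_norm_hasDerivWithin_le (f := f) (f' := f')
    (s := Set.uIcc u z) (C := f' u + Ch * ρ ^ ε) (x := u) (y := z)
    (fun x _ => (hd x).hasDerivWithinAt)
    (fun x hx => by
      rw [Real.norm_eq_abs, abs_of_pos (hpos x)]
      have h1 := hh x u
      have h2 : |x - u| ≤ |z - u| := Set.abs_sub_left_of_mem_uIcc hx
      have h3 : |x - u| ^ ε ≤ ρ ^ ε :=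
        Real.rpow_le_rpow (abs_nonneg _) (h2.trans hz) hε.le
      have h4 := mul_le_mul_of_nonneg_left h3 hCh
      have h5 := le_abs_self (f' x - f' u)
      linarith)
    (convex_uIcc u z) Set.left_mem_uIcc Set.right_mem_uIcc
  simp only [Real.norm_eq_abs] at this
  refine this.trans (mul_le_mul_of_nonneg_right ?_ (abs_nonneg _))
  have h1 := Real.add_one_le_exp (Ch / c * ρ ^ ε)
  have h2 : Ch * ρ ^ ε ≤ f' u * (Ch / c * ρ ^ ε) := by
    have h0 : 0 ≤ Ch / c * ρ ^ ε := by positivity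
    calc Ch * ρ ^ ε = c * (Ch / c * ρ ^ ε) := by field_simp
      _ ≤ _ := mul_le_mul_of_nonneg_right hu h0
  nlinarith [mul_le_mul_of_nonneg_left h1 (hpos u).le]

lemma ker_step {f f' : ℝ → ℝ} {Ch ε c ρ lam α : ℝ} (hd : ∀ x, HasDerivAt f (f' x) x)
    (hpos : ∀ x, 0 < f' x) (hle : ∀ x, f' x ≤ lam) (hε : 0 < ε) (hCh : 0 ≤ Ch)
    (hh : ∀ x y, |f' x - f' y| ≤ Ch * |x - y| ^ ε) (hc : 0 < c) (hα : 0 < α)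
    (u z : ℝ) (hu : c ≤ f' u) :
    ENNReal.ofReal ((f' u)⁻¹ ^ α) * ker α ρ u z ≤
      ENNReal.ofReal (Real.exp (α * (Ch / c * ρ ^ ε))) * ker α (lam * ρ) (f u) (f z) := by
  by_cases hz : |z - u| ≤ ρ
  · have hlam : 0 < lam := (hpos u).trans_le (hle u)
    have h1 := lip hd hpos hle u z
    have h2 : |f z - f u| ≤ lam * ρ := h1.trans (mul_le_mul_of_nonneg_left hz hlam.le)
    have h3 := distort hd hpos hε hCh hh hc u z hu hz
    have e1 : ker α ρ u z = ENNReal.ofReal |z - u| ^ (-α) :=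
      Set.indicator_of_mem (by rwa [Metric.mem_closedBall, Real.dist_eq]) _
    have e2 : ker α (lam * ρ) (f u) (f z) = ENNReal.ofReal |f z - f u| ^ (-α) :=
      Set.indicator_of_mem (by rwa [Metric.mem_closedBall, Real.dist_eq]) _
    rw [e1, e2]
    set q := f' u * Real.exp (Ch / c * ρ ^ ε) with hq
    have hq0 : 0 < q := mul_pos (hpos u) (Real.exp_pos _)
    have h4 : ENNReal.ofReal (q * |z - u|) ^ (-α) ≤ ENNReal.ofReal |f z - f u| ^ (-α) := by
      rw [ENNReal.rpow_neg, ENNReal.rpow_neg, ENNReal.inv_le_inv]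
      exact ENNReal.rpow_le_rpow (ENNReal.ofReal_le_ofReal h3) hα.le
    refine le_trans ?_ (mul_le_mul_right h4 _)
    rw [ENNReal.ofReal_mul hq0.le, ENNReal.mul_rpow_of_ne_top ENNReal.ofReal_ne_top
      ENNReal.ofReal_ne_top, ← mul_assoc, ENNReal.ofReal_rpow_of_pos hq0,
      ← ENNReal.ofReal_mul (Real.exp_pos _).le]
    refine mul_le_mul_left (ENNReal.ofReal_le_ofReal (le_of_eq ?_)) _
    rw [hq, Real.mul_rpow (hpos u).le (Real.exp_pos _).le, ← Real.exp_mul,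
      Real.inv_rpow (hpos u).le, Real.rpow_neg (hpos u).le]
    rw [mul_left_comm, ← Real.exp_add]
    have : α * (Ch / c * ρ ^ ε) + Ch / c * ρ ^ ε * -α = 0 := by ring
    rw [this]; simp
  · have : ker α ρ u z = 0 :=
      Set.indicator_of_notMem (by rwa [Metric.mem_closedBall, Real.dist_eq]) _
    simp [this]

lemma inv_deriv {f f' : ℝ → ℝ} (hb : Function.Bijective f) (hd : ∀ x, HasDerivAt f (f' x) x)
    (hpos : ∀ x, 0 < f' x) (x : ℝ) :
    deriv (Function.invFun f) x = (f' (Function.invFun f x))⁻¹ := by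
  have hR : Function.RightInverse (Function.invFun f) f :=
    Function.rightInverse_invFun hb.2
  have hL : Function.LeftInverse (Function.invFun f) f := Function.leftInverse_invFun hb.1
  have hm : StrictMono f := strictMono_of_hasDerivAt_pos hd hpos
  have hmi : Monotone (Function.invFun f) := by
    intro s t hst
    rw [← hm.le_iff_le, hR, hR]; exact hst
  have hcont := hmi.continuous_of_surjective hL.surjective
  exact (HasDerivAt.of_local_left_inverse hcont.continuousAt (hd _) (hpos _).ne'
    (Filter.Eventually.of_forall hR)).deriv

lemma lintegral_stat {n : ℕ} {f : Fin n → ℝ → ℝ} {p : Fin n → ℝ} {μ : Measure ℝ}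
    (hμ : μ = ∑ j, ENNReal.ofReal (p j) • Measure.map (f j) μ)
    (hf : ∀ j, Measurable (f j)) {g : ℝ → ℝ≥0∞} (hg : Measurable g) :
    ∫⁻ y, g y ∂μ = ∑ j, ENNReal.ofReal (p j) * ∫⁻ z, g (f j z) ∂μ := by
  conv_lhs => rw [hμ]
  rw [lintegral_finsetSum_measure]
  refine Finset.sum_congr rfl fun j _ => ?_
  rw [lintegral_smul_measure, lintegral_map hg (hf j), smul_eq_mul]

/-- Uniform bound of the truncated potential by the tail of a series. -/
lemma potential_le {μ : Measure ℝ} {α αbar C ρ0 lam : ℝ} (hα : 0 < α) (hαbar : α < αbar)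
    (hρ : 0 < ρ0) (hl0 : 0 < lam) (hl1 : lam < 1)
    (hreg : ∀ (x ρ : ℝ), 0 < ρ →
      μ (Metric.closedBall x ρ) ≤ ENNReal.ofReal (C * ρ ^ αbar)) (m : ℕ) (x : ℝ) :
    ∫⁻ y, ker α (lam ^ m * ρ0) x y ∂μ ≤
      ∑' k : ℕ, ENNReal.ofReal ((lam ^ (k + m + 1) * ρ0) ^ (-α)) *
        ENNReal.ofReal (C * (lam ^ (k + m) * ρ0) ^ αbar) := by
  have hx0 : μ {x} = 0 := by
    have ht : Filter.Tendsto (fun ρ : ℝ => ENNReal.ofReal (C * ρ ^ αbar))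
        (nhdsWithin 0 (Set.Ioi 0)) (nhds 0) := by
      have : ContinuousAt (fun ρ : ℝ => ENNReal.ofReal (C * ρ ^ αbar)) 0 := by
        apply ENNReal.continuous_ofReal.continuousAt.comp
        apply ContinuousAt.mul continuousAt_const
        exact Real.continuousAt_rpow_const _ _ (Or.inr (hα.trans hαbar).le)
      have h2 := this.tendsto
      simp only [Real.zero_rpow (hα.trans hαbar).ne', mul_zero, ENNReal.ofReal_zero] at h2
      exact h2.mono_left nhdsWithin_le_nhds
    refine le_antisymm (ge_of_tendsto ht ?_) zero_le
    filter_upwards [self_mem_nhdsWithin] with ρ hρ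
    refine (measure_mono ?_).trans (hreg x ρ hρ)
    simpa using le_of_lt hρ
  have hrk : ∀ k : ℕ, 0 < lam ^ k * ρ0 := fun k => by positivity
  calc ∫⁻ y, ker α (lam ^ m * ρ0) x y ∂μ
      ≤ ∫⁻ y, ∑' k : ℕ, (Metric.closedBall x (lam ^ (k + m) * ρ0)).indicator
          (fun _ => ENNReal.ofReal ((lam ^ (k + m + 1) * ρ0) ^ (-α))) y ∂μ := by
        apply lintegral_mono_ae
        have : ∀ᵐ y ∂μ, y ≠ x := by
          rw [ae_iff]; simpa using hx0
        filter_upwards [this] with y hy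
        by_cases hm : y ∈ Metric.closedBall x (lam ^ m * ρ0)
        · have hd0 : 0 < |y - x| := abs_pos.2 (sub_ne_zero.2 hy)
          have hd1 : |y - x| ≤ lam ^ m * ρ0 := by
            rwa [Metric.mem_closedBall, Real.dist_eq] at hm
          have hex : ∃ k : ℕ, lam ^ (k + m + 1) * ρ0 < |y - x| := by
            obtain ⟨k, hk⟩ := exists_pow_lt_of_lt_one (div_pos hd0 hρ) hl1
            refine ⟨k, ?_⟩
            rw [lt_div_iff₀ hρ] at hk
            refine lt_of_le_of_lt ?_ hk
            exact mul_le_mul_of_nonneg_right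
              (pow_le_pow_of_le_one hl0.le hl1.le (by omega)) hρ.le
          classical
          have hk := Nat.find_spec hex
          set k := Nat.find hex with hkdef
          have hk2 : |y - x| ≤ lam ^ (k + m) * ρ0 := by
            rcases Nat.eq_zero_or_pos k with h0 | h0
            · rw [h0, zero_add]; exact hd1
            · have := Nat.find_min hex (m := k - 1) (by omega)
              rw [not_lt] at this
              have e : k - 1 + m + 1 = k + m := by omega
              rwa [e] at this
          refine le_trans ?_ (ENNReal.le_tsum k)
          rw [Set.indicator_of_mem (by rwa [Metric.mem_closedBall, Real.dist_eq])]
          rw [ker, Set.indicator_of_mem hm, ENNReal.ofReal_rpow_of_pos hd0]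
          exact ENNReal.ofReal_le_ofReal
            (Real.rpow_le_rpow_of_nonpos (hrk _) hk.le (by linarith))
        · rw [ker, Set.indicator_of_notMem hm]; exact zero_le
    _ = ∑' k : ℕ, ENNReal.ofReal ((lam ^ (k + m + 1) * ρ0) ^ (-α)) *
          μ (Metric.closedBall x (lam ^ (k + m) * ρ0)) := by
        rw [lintegral_tsum]
        · congr 1; ext k
          rw [lintegral_indicator_const measurableSet_closedBall]
        · intro k
          exact (measurable_const.indicator measurableSet_closedBall).aemeasurable
    _ ≤ _ := ENNReal.tsum_le_tsum fun k => mul_le_mul_right (hreg x _ (hrk _)) _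

lemma tail_tendsto {α αbar C ρ0 lam : ℝ} (hαbar : α < αbar) (hC : 0 < C)
    (hρ : 0 < ρ0) (hl0 : 0 < lam) (hl1 : lam < 1) :
    Filter.Tendsto (fun m : ℕ => ∑' k : ℕ, ENNReal.ofReal ((lam ^ (k + m + 1) * ρ0) ^ (-α)) *
        ENNReal.ofReal (C * (lam ^ (k + m) * ρ0) ^ αbar)) Filter.atTop (nhds 0) := by
  have := ENNReal.tendsto_sum_nat_add (fun k : ℕ =>
    ENNReal.ofReal ((lam ^ (k + 1) * ρ0) ^ (-α)) *
        ENNReal.ofReal (C * (lam ^ k * ρ0) ^ αbar)) ?_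
  · exact this
  · have e : ∀ k : ℕ, ENNReal.ofReal ((lam ^ (k + 1) * ρ0) ^ (-α)) *
        ENNReal.ofReal (C * (lam ^ k * ρ0) ^ αbar) =
        ENNReal.ofReal ((C * lam ^ (-α) * ρ0 ^ (-α) * ρ0 ^ αbar) *
          (lam ^ (αbar - α)) ^ k) := by
      intro k
      rw [← ENNReal.ofReal_mul (by positivity)]
      congr 1
      have hk : 0 < lam ^ k := by positivity
      rw [pow_succ, Real.mul_rpow (by positivity) hρ.le, Real.mul_rpow hk.le hl0.le,
        Real.mul_rpow hk.le hρ.le, ← Real.rpow_natCast (lam ^ (αbar - α)) k,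
        ← Real.rpow_mul hl0.le, mul_comm (αbar - α), Real.rpow_mul hl0.le, Real.rpow_natCast,
        sub_eq_neg_add, Real.rpow_add hk]
      ring
    simp_rw [e]
    apply Summable.tsum_ofReal_ne_top
    apply Summable.mul_left
    exact summable_geometric_of_lt_one (by positivity)
      (Real.rpow_lt_one hl0.le hl1 (by linarith))

end IterAux

/-- Lemma: for an iterated function scheme of uniformly contracting `C^{1+ε}`
orientation-preserving diffeomorphisms preserving a compact interval `J = [a,b]`, if the
stationary measure `μ` is `ᾱ`-regular for some `ᾱ > α`, then there is `r > 0` such that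
the iterates of the indicator of the closed `r`-neighbourhood `B_r(J)` under the
asymmetric diffusion operator `D^{(1)}_{α,T}` converge uniformly to zero. -/
theorem iterates_indicator_tend_to_zero (n : ℕ) (a b : ℝ) (hab : a ≤ b)
    (ε lamMax : ℝ) (hε : 0 < ε) (hlam : lamMax < 1)
    (f : Fin n → ℝ → ℝ) (f' : Fin n → ℝ → ℝ)
    (hbij : ∀ j, Function.Bijective (f j))
    (hderiv : ∀ j x, HasDerivAt (f j) (f' j x) x)
    (hpos : ∀ j x, 0 < f' j x)
    (hle : ∀ j x, f' j x ≤ lamMax)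
    (Ch : ℝ) (hholder : ∀ j x y, |f' j x - f' j y| ≤ Ch * |x - y| ^ ε)
    (hmaps : ∀ j, ∀ x ∈ Set.Icc a b, f j x ∈ Set.Icc a b)
    (p : Fin n → ℝ) (hp : ∀ j, 0 < p j) (hpsum : ∑ j, p j = 1)
    (μ : Measure ℝ) [IsProbabilityMeasure μ]
    (hμ : μ = ∑ j, ENNReal.ofReal (p j) • Measure.map (f j) μ)
    (α αbar C : ℝ) (hα : 0 < α) (hαbar : α < αbar) (hC : 0 < C)
    (hreg : ∀ (x ρ : ℝ), 0 < ρ →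
      μ (Metric.closedBall x ρ) ≤ ENNReal.ofReal (C * ρ ^ αbar)) :
    ∃ r : ℝ, 0 < r ∧
      TendstoUniformly
        (fun (m : ℕ) (x : ℝ) =>
          (D1op n α f p)^[m] ((Metric.cthickening r (Set.Icc a b)).indicator 1) x)
        0 Filter.atTop := by
  classical
  have hn : Nonempty (Fin n) := by
    by_contra h
    rw [not_nonempty_iff] at h
    simp at hpsum
  obtain ⟨j0⟩ := hn
  have hl0 : 0 < lamMax := (hpos j0 0).trans_le (hle j0 0)
  have hCh : 0 ≤ Ch := by
    have := (abs_nonneg _).trans (hholder j0 1 0)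
    simpa using this
  have hJc : IsCompact (Set.Icc a b) := isCompact_Icc
  set K := Metric.cthickening 1 (Set.Icc a b) with hK
  have hKc : IsCompact K := hJc.cthickening
  have hfm : ∀ j, Measurable (f j) := fun j =>
    (continuous_iff_continuousAt.2 fun x => (hderiv j x).continuousAt).measurable
  have hKmem : ∀ x, x ∈ K ↔ ∃ y ∈ Set.Icc a b, |x - y| ≤ 1 := by
    intro x
    rw [hK, hJc.cthickening_eq_biUnion_closedBall zero_le_one]
    simp [Real.dist_eq]
  have hKmaps : ∀ j, ∀ x ∈ K, f j x ∈ K := by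
    intro j x hx
    obtain ⟨y, hy, hxy⟩ := (hKmem x).1 hx
    refine (hKmem _).2 ⟨f j y, hmaps j y hy, ?_⟩
    refine (IterAux.lip (hderiv j) (hpos j) (hle j) y x).trans ?_
    nlinarith [abs_nonneg (x - y)]
  -- lower bound on the derivatives
  have hc : ∃ c : ℝ, 0 < c ∧ ∀ j, ∀ x ∈ K, c ≤ f' j x := by
    have hcont : ∀ j, Continuous (f' j) := by
      intro j
      rw [continuous_iff_continuousAt]
      intro x
      rw [ContinuousAt, tendsto_iff_dist_tendsto_zero]
      have ht : Filter.Tendsto (fun y => Ch * |y - x| ^ ε) (nhds x) (nhds 0) := by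
        have : ContinuousAt (fun y => Ch * |y - x| ^ ε) x := by
          apply ContinuousAt.mul continuousAt_const
          apply ContinuousAt.rpow_const (by fun_prop) (Or.inr hε.le)
        have h2 := this.tendsto
        simpa [Real.zero_rpow hε.ne'] using h2
      exact squeeze_zero (fun _ => dist_nonneg) (fun y => hholder j y x) ht
    have haK : a ∈ K := (hKmem a).2 ⟨a, ⟨le_rfl, hab⟩, by simp⟩
    have : ∀ j, ∃ x ∈ K, ∀ y ∈ K, f' j x ≤ f' j y := fun j =>
      hKc.exists_isMinOn ⟨a, haK⟩ (hcont j).continuousOn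
    choose x hx hmin using this
    have hne : (Finset.univ : Finset (Fin n)).Nonempty := ⟨j0, Finset.mem_univ _⟩
    refine ⟨Finset.univ.inf' hne (fun j => f' j (x j)), ?_, ?_⟩
    · rw [Finset.lt_inf'_iff]; exact fun j _ => hpos j _
    · intro j y hy
      exact (Finset.inf'_le _ (Finset.mem_univ j)).trans (hmin j y hy)
  obtain ⟨c, hc0, hc⟩ := hc
  -- a ball of positive mass
  have hN : ∃ N : ℕ, μ (Metric.closedBall 0 N) ≠ 0 := by
    by_contra! h
    have h1 := measure_iUnion_null h
    have h2 : (⋃ i : ℕ, Metric.closedBall (0 : ℝ) i) = Set.univ :=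
      Metric.iUnion_closedBall_nat 0
    rw [h2] at h1
    simp at h1
  obtain ⟨N, hN⟩ := hN
  obtain ⟨R, hR⟩ := hKc.isBounded.subset_closedBall 0
  set ρ0 : ℝ := N + |R| + 1 with hρ0
  have hρ : 0 < ρ0 := by positivity
  set B := ENNReal.ofReal (ρ0 ^ (-α)) * μ (Metric.closedBall 0 N) with hB
  have hB0 : B ≠ 0 := by
    refine mul_ne_zero ?_ hN
    rw [ENNReal.ofReal_ne_zero_iff]; positivity
  have hBtop : B ≠ ⊤ := ENNReal.mul_ne_top ENNReal.ofReal_ne_top (measure_ne_top _ _)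
  set ψ : ℝ → ℝ := K.indicator 1 with hψ
  set g : ℕ → ℝ → ℝ := fun m => (D1op n α f p)^[m] ψ with hg
  have hgs : ∀ m x, g (m + 1) x = ∑ j, p j * ((f' j (Function.invFun (f j) x))⁻¹) ^ α *
      g m (Function.invFun (f j) x) := by
    intro m x
    simp only [hg, Function.iterate_succ', Function.comp]
    rw [D1op]
    refine Finset.sum_congr rfl fun j _ => ?_
    rw [IterAux.inv_deriv (hbij j) (hderiv j) (hpos j),
      abs_of_pos (inv_pos.2 (hpos j _))]
  have hg0 : ∀ m x, 0 ≤ g m x := by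
    intro m
    induction m with
    | zero => intro x; exact Set.indicator_nonneg (fun _ _ => zero_le_one) x
    | succ m ih =>
      intro x
      rw [hgs]
      refine Finset.sum_nonneg fun j _ => mul_nonneg (mul_nonneg (hp j).le ?_) (ih _)
      exact Real.rpow_nonneg (inv_pos.2 (hpos j _)).le _
  have hinv : ∀ j x, f j (Function.invFun (f j) x) = x := fun j =>
    Function.rightInverse_invFun (hbij j).2
  have hgK : ∀ m x, x ∉ K → g m x = 0 := by
    intro m
    induction m with
    | zero => intro x hx; exact Set.indicator_of_notMem hx _
    | succ m ih =>
      intro x hx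
      rw [hgs]
      refine Finset.sum_eq_zero fun j _ => ?_
      rw [ih, mul_zero]
      intro h
      apply hx
      rw [← hinv j x]
      exact hKmaps j _ h
  set θ : ℕ → ℝ := fun m => Ch / c * (lamMax ^ m * ρ0) ^ ε with hθ
  have hθ0 : ∀ m, 0 ≤ θ m := fun m => by positivity
  -- main estimate
  have hmain : ∀ m x, ENNReal.ofReal (g m x) ≤
      B⁻¹ * ENNReal.ofReal (Real.exp (α * ∑ i ∈ Finset.range m, θ i)) *
        ∫⁻ y, IterAux.ker α (lamMax ^ m * ρ0) x y ∂μ := by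
    intro m
    induction m with
    | zero =>
      intro x
      by_cases hx : x ∈ K
      · have h1 : g 0 x = 1 := by
          simp only [hg, Function.iterate_zero, id, hψ]
          rw [Set.indicator_of_mem hx]; rfl
        rw [h1]
        have h2 : B ≤ ∫⁻ y, IterAux.ker α (lamMax ^ 0 * ρ0) x y ∂μ := by
          rw [hB, ← lintegral_indicator_const measurableSet_closedBall]
          apply lintegral_mono_ae
          have hxnull : ∀ y, y ∈ Metric.closedBall (0 : ℝ) N → |y - x| ≤ ρ0 := by
            intro y hy
            have hxR := hR hx
            simp only [Metric.mem_closedBall, Real.dist_eq, sub_zero] at hy hxR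
            have := abs_sub y x
            have := le_abs_self R
            linarith
          refine Filter.Eventually.of_forall fun y => ?_
          by_cases hy : y ∈ Metric.closedBall (0 : ℝ) N
          · have h3 := hxnull y hy
            have e : IterAux.ker α (lamMax ^ 0 * ρ0) x y = ENNReal.ofReal |y - x| ^ (-α) :=
              Set.indicator_of_mem (by
                rw [Metric.mem_closedBall, Real.dist_eq]; simpa using h3) _
            rw [Set.indicator_of_mem hy, e, ← ENNReal.ofReal_rpow_of_pos hρ,
              ENNReal.rpow_neg, ENNReal.rpow_neg, ENNReal.inv_le_inv]
            exact ENNReal.rpow_le_rpow (ENNReal.ofReal_le_ofReal h3) hα.le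
          · rw [Set.indicator_of_notMem hy]; exact zero_le
        calc ENNReal.ofReal 1 = B⁻¹ * B := by
              rw [ENNReal.inv_mul_cancel hB0 hBtop]; simp
          _ ≤ B⁻¹ * ∫⁻ y, IterAux.ker α (lamMax ^ 0 * ρ0) x y ∂μ := mul_le_mul_right h2 _
          _ = _ := by simp
      · rw [hgK 0 x hx]; simp
    | succ m ih =>
      intro x
      rw [IterAux.lintegral_stat hμ hfm (IterAux.measurable_ker _ _ _), Finset.mul_sum, hgs,
        ENNReal.ofReal_sum_of_nonneg (fun j _ => mul_nonneg (mul_nonneg (hp j).le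
          (Real.rpow_nonneg (inv_pos.2 (hpos j _)).le _)) (hg0 _ _))]
      refine Finset.sum_le_sum fun j _ => ?_
      set u := Function.invFun (f j) x with hu
      by_cases huK : u ∈ K
      · have hfu : f j u = x := hinv j x
        rw [ENNReal.ofReal_mul (mul_nonneg (hp j).le
          (Real.rpow_nonneg (inv_pos.2 (hpos j _)).le _)), ENNReal.ofReal_mul (hp j).le]
        have hker : ENNReal.ofReal ((f' j u)⁻¹ ^ α) *
            ∫⁻ z, IterAux.ker α (lamMax ^ m * ρ0) u z ∂μ ≤
            ENNReal.ofReal (Real.exp (α * θ m)) *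
            ∫⁻ z, IterAux.ker α (lamMax ^ (m + 1) * ρ0) x (f j z) ∂μ := by
          have hms : Measurable fun z =>
              IterAux.ker α (lamMax ^ (m + 1) * ρ0) x (f j z) :=
            (IterAux.measurable_ker _ _ _).comp (hfm j)
          rw [← lintegral_const_mul _ (IterAux.measurable_ker _ _ _),
            ← lintegral_const_mul _ hms]
          refine lintegral_mono fun z => ?_
          have := IterAux.ker_step (ρ := lamMax ^ m * ρ0) (hderiv j) (hpos j) (hle j) hε hCh
            (hholder j) hc0 hα u z (hc j u huK)
          rw [hfu, ← mul_assoc lamMax, ← pow_succ'] at this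
          exact this
        have hexp : ENNReal.ofReal (Real.exp (α * ∑ i ∈ Finset.range (m + 1), θ i)) =
            ENNReal.ofReal (Real.exp (α * ∑ i ∈ Finset.range m, θ i)) *
            ENNReal.ofReal (Real.exp (α * θ m)) := by
          rw [← ENNReal.ofReal_mul (Real.exp_pos _).le, ← Real.exp_add,
            Finset.sum_range_succ, mul_add]
        rw [hexp]
        set E := ENNReal.ofReal (Real.exp (α * ∑ i ∈ Finset.range m, θ i))
        set P := ENNReal.ofReal (p j)
        calc _ ≤ P * ENNReal.ofReal ((f' j u)⁻¹ ^ α) *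
              (B⁻¹ * E * ∫⁻ z, IterAux.ker α (lamMax ^ m * ρ0) u z ∂μ) :=
              mul_le_mul_right (ih u) _
          _ = P * (B⁻¹ * E) * (ENNReal.ofReal ((f' j u)⁻¹ ^ α) *
              ∫⁻ z, IterAux.ker α (lamMax ^ m * ρ0) u z ∂μ) := by ring
          _ ≤ P * (B⁻¹ * E) * (ENNReal.ofReal (Real.exp (α * θ m)) *
            ∫⁻ z, IterAux.ker α (lamMax ^ (m + 1) * ρ0) x (f j z) ∂μ) :=
              mul_le_mul_right hker _
          _ = _ := by ring
      · rw [hgK m u huK]; simp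
  have hsum : Summable θ := by
    have e : θ = fun m : ℕ => (Ch / c * ρ0 ^ ε) * (lamMax ^ ε) ^ m := by
      funext m
      simp only [hθ]
      rw [Real.mul_rpow (by positivity) hρ.le, ← Real.rpow_natCast (lamMax ^ ε) m,
        ← Real.rpow_mul hl0.le, mul_comm ε, Real.rpow_mul hl0.le, Real.rpow_natCast]
      ring
    rw [e]
    exact (summable_geometric_of_lt_one (by positivity)
      (Real.rpow_lt_one hl0.le hlam hε)).mul_left _
  set A := B⁻¹ * ENNReal.ofReal (Real.exp (α * ∑' i, θ i)) with hA
  have hAtop : A ≠ ⊤ := ENNReal.mul_ne_top (ENNReal.inv_ne_top.2 hB0) ENNReal.ofReal_ne_top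
  have hT := ENNReal.Tendsto.const_mul (a := A)
    (IterAux.tail_tendsto (C := C) hαbar hC hρ hl0 hlam) (Or.inr hAtop)
  rw [mul_zero] at hT
  refine ⟨1, one_pos, ?_⟩
  rw [Metric.tendstoUniformly_iff]
  intro δ hδ
  have hev := hT.eventually (gt_mem_nhds (ENNReal.ofReal_pos.2 hδ))
  filter_upwards [hev] with m hm x
  have h1 : ENNReal.ofReal (g m x) < ENNReal.ofReal δ := by
    refine lt_of_le_of_lt ((hmain m x).trans ?_) hm
    refine mul_le_mul' (mul_le_mul_right (ENNReal.ofReal_le_ofReal ?_) _)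
      (IterAux.potential_le hα hαbar hρ hl0 hlam hreg m x)
    exact Real.exp_le_exp.2 (mul_le_mul_of_nonneg_left
      (hsum.sum_le_tsum _ fun i _ => hθ0 i) hα.le)
  have h2 : g m x < δ := (ENNReal.ofReal_lt_ofReal_iff hδ).1 h1
  have h3 : dist ((0 : ℝ → ℝ) x) (g m x) = g m x := by
    simp [Real.dist_eq, abs_of_nonneg (hg0 m x)]
  exact h3.trans_lt h2
end

section
/- Let 0 < ε < 1, set δ := 2ε − ε², and define f_ε : ℝ → ℝ by f_ε(x) := exp(−δ(1 − ε)² x²). Then for every x ∈ ℝ, (1/4)·( f_ε((x+1)/(1−ε)) + f_ε((x−1)/(1−ε)) + 2 f_ε(x/(1−ε)) ) ≤ ((1 + e^{−δ})/2) · f_ε(x). In particular, for every u ∈ ℝ one has 1/2 + (1/2)·cosh(2u) ≤ exp(u²). -/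
/-- The key estimate of Theorem 1.8: for `0 < ε < 1`, `δ := 2ε − ε²` and the Gaussian test
function `f_ε(x) := exp(−δ(1−ε)²x²)`, one has
`(1/4)(f_ε((x+1)/(1−ε)) + f_ε((x−1)/(1−ε)) + 2f_ε(x/(1−ε))) ≤ ((1+e^{−δ})/2)·f_ε(x)`
for all real `x`; in particular `1/2 + (1/2)cosh(2u) ≤ exp(u²)` for every real `u`. -/
theorem gaussian_test_function_estimate (ε : ℝ) (hε0 : 0 < ε) (hε1 : ε < 1) :
    (∀ x : ℝ,
      1 / 4 * (Real.exp (-((2 * ε - ε ^ 2) * (1 - ε) ^ 2 * ((x + 1) / (1 - ε)) ^ 2))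
          + Real.exp (-((2 * ε - ε ^ 2) * (1 - ε) ^ 2 * ((x - 1) / (1 - ε)) ^ 2))
          + 2 * Real.exp (-((2 * ε - ε ^ 2) * (1 - ε) ^ 2 * (x / (1 - ε)) ^ 2)))
        ≤ (1 + Real.exp (-(2 * ε - ε ^ 2))) / 2 *
            Real.exp (-((2 * ε - ε ^ 2) * (1 - ε) ^ 2 * x ^ 2))) ∧
    ∀ u : ℝ, 1 / 2 + 1 / 2 * Real.cosh (2 * u) ≤ Real.exp (u ^ 2) := by
  have key : ∀ u : ℝ, 1 / 2 + 1 / 2 * Real.cosh (2 * u) ≤ Real.exp (u ^ 2) := by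
    intro u
    have h := Real.cosh_le_exp_half_sq u
    have h0 := Real.cosh_pos u
    have h2 : Real.exp (u ^ 2) = Real.exp (u ^ 2 / 2) * Real.exp (u ^ 2 / 2) := by
      rw [← Real.exp_add]; congr 1; ring
    have h3 := Real.cosh_two_mul u
    have h4 := Real.cosh_sq u
    have h5 := mul_self_le_mul_self h0.le h
    rw [h2, h3]
    nlinarith
  refine ⟨fun x => ?_, key⟩
  have hne : (1 - ε) ≠ 0 := by linarith
  have hc : ∀ y : ℝ, (2 * ε - ε ^ 2) * (1 - ε) ^ 2 * (y / (1 - ε)) ^ 2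
      = (2 * ε - ε ^ 2) * y ^ 2 := by
    intro y; field_simp
  rw [hc, hc, hc]
  have hd : (2 * ε - ε ^ 2) * (1 - ε) ^ 2 * x ^ 2
      = (2 * ε - ε ^ 2) * (1 - (2 * ε - ε ^ 2)) * x ^ 2 := by ring
  rw [hd]
  have hpos : 0 < 2 * ε - ε ^ 2 := by nlinarith
  generalize 2 * ε - ε ^ 2 = d at *
  have e1 : Real.exp (-(d * (x + 1) ^ 2))
      = Real.exp (-(d * x ^ 2)) * Real.exp (-d) * Real.exp (-(2 * (d * x))) := by
    rw [← Real.exp_add, ← Real.exp_add]; congr 1; ring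
  have e2 : Real.exp (-(d * (x - 1) ^ 2))
      = Real.exp (-(d * x ^ 2)) * Real.exp (-d) * Real.exp (2 * (d * x)) := by
    rw [← Real.exp_add, ← Real.exp_add]; congr 1; ring
  have e3 : Real.exp (-(d * (1 - d) * x ^ 2))
      = Real.exp (-(d * x ^ 2)) * Real.exp ((d * x) ^ 2) := by
    rw [← Real.exp_add]; congr 1; ring
  have k := key (d * x)
  rw [Real.cosh_eq] at k
  have hq : Real.exp (-d) ≤ 1 := Real.exp_le_one_iff.mpr (by linarith)
  have hq0 := Real.exp_pos (-d)
  have hE : 1 ≤ Real.exp ((d * x) ^ 2) := Real.one_le_exp (sq_nonneg _)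
  have hG := Real.exp_pos (-(d * x ^ 2))
  rw [e1, e2, e3]
  generalize Real.exp (-(d * x ^ 2)) = G at *
  generalize Real.exp (-d) = q at *
  generalize Real.exp ((d * x) ^ 2) = E at *
  generalize Real.exp (2 * (d * x)) = a at *
  generalize Real.exp (-(2 * (d * x))) = b at *
  have m : 1 / 4 * (q * b + q * a + 2) ≤ (1 + q) / 2 * E := by
    nlinarith [mul_le_mul_of_nonneg_left k hq0.le,
      mul_nonneg (sub_nonneg.2 hq) (sub_nonneg.2 hE)]
  have := mul_le_mul_of_nonneg_left m hG.le
  linarith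
end
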